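/- The intersection of the Markov spectrum M with the open interval (4√30/7, (16351+720√30)/6409) consists of exactly one point, namely √10, which is therefore an isolated point of M. Moreover, both endpoints 4√30/7 and (16351+720√30)/6409 belong to M. -/

import Mathlib

open Filter Set MeasureTheory
open scoped ENNReal

/-- Finite continued fraction `[a 0; a 1, ..., a n]`. -/
noncomputable def cfConv : (ℕ → ℝ) → ℕ → ℝ
  | a, 0 => a 0
  | a, n + 1 => a 0 + 1 / cfConv (fun i => a (i + 1)) n

/-- Value of the infinite continued fraction `[a 0; a 1, a 2, ...]`,
as the limit of its convergents. -/
noncomputable def cfVal (a : ℕ → ℝ) : ℝ := limUnder atTop (cfConv a)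

/-- `λ_k(α) = [α_k; α_{k+1}, ...] + [0; α_{k-1}, α_{k-2}, ...]`. -/
noncomputable def lambdaVal (α : ℤ → ℕ) (k : ℤ) : ℝ :=
  cfVal (fun n => (α (k + n) : ℝ)) +
  cfVal (fun n => if n = 0 then 0 else (α (k - n) : ℝ))

/-- The Markov value `m(α) = sup_{k ∈ ℤ} λ_k(α)`. -/
noncomputable def markovValue (α : ℤ → ℕ) : ℝ := ⨆ k : ℤ, lambdaVal α k

/-- The Markov spectrum. -/
def markovSpectrum : Set ℝ :=
  { x | ∃ α : ℤ → ℕ, (∀ n, 0 < α n) ∧ BddAbove (range (lambdaVal α)) ∧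
      markovValue α = x }

/-- The dimension function `d(t) = dim_H (M ∩ (-∞, t))`. -/
noncomputable def dimFun (t : ℝ) : ℝ≥0∞ := dimH (markovSpectrum ∩ Iio t)

/-!
The value of a continued fraction is a monotone function of each of its tails, so fixing finitely
many digits and bounding the remaining tail bounds the value.

Let `α` have all its values below the right endpoint. Its digits are `1` and `2`, and a word `121`
can only occur inside `11211`, so `2121` and `1212` do not occur. Hence every tail is at least
`τ = [0; 2, 1, 2, 2, 2, 1, 2, 2, …]`: the infimum `m` of the tails of a sequence avoiding `2121`
satisfies `[0; 2, 1, 2, 2 + m] ≤ m`. Given this bound, only a `2` between two `1`s can have a value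
above `4√30/7 = 2 + [0; 2 + τ] + [0; 1, 2, 2 + τ]`.

Around such an isolated `2` the digits `112` are forced on both sides. Suppose that the ray on one
side has value `x` and begins with `1122`, and let `y` be the value of the other ray after its
digits `112`. With `φ t = [0; 1, 1, 2 + t]`, the values at the two consecutive isolated `2`s are
`2 + x + φ y` and `2 + y + φ x`. Since `φ` is decreasing and `t + φ t` is increasing, the larger one
is at least `2 + A + φ A` for `A = [0; 1, 1, 2, 2 + τ] ≤ x`, and this is the right endpoint. Hence
the isolated `2`s repeat with period three, so `α` is the periodic sequence `112`, with value `√10`.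
Both endpoints are attained by the sequences for which these estimates are equalities.
-/

/-! ### Convergence of infinite continued fractions -/

lemma cfConv_mem_Icc {a : ℕ → ℝ} (ha : ∀ i, 1 ≤ a (i + 1)) (n : ℕ) :
    cfConv a n ∈ Icc (a 0) (a 0 + 1) := by
  induction n generalizing a with
  | zero => simp [cfConv]
  | succ n ih =>
    have one_le_tail : 1 ≤ cfConv (fun i => a (i + 1)) n :=
      (ha 0).trans (ih (a := fun i => a (i + 1)) fun i => ha (i + 1)).1
    have inv_le_one : 1 / cfConv (fun i => a (i + 1)) n ≤ 1 :=
      div_le_one_of_le₀ one_le_tail (by positivity)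
    exact ⟨le_add_of_nonneg_right (by positivity), add_le_add_right inv_le_one _⟩

lemma dist_one_div_add_one_div_le {b x y : ℝ} (hb : 1 ≤ b) (hx : 1 ≤ x) (hy : 1 ≤ y) :
    dist (1 / (b + 1 / x)) (1 / (b + 1 / y)) ≤ dist x y / 4 := by
  have two_le_left : 2 ≤ b * x + 1 := by nlinarith
  have two_le_right : 2 ≤ b * y + 1 := by nlinarith
  have four_le : 4 ≤ (b * x + 1) * (b * y + 1) := by nlinarith
  have difference_eq : 1 / (b + 1 / x) - 1 / (b + 1 / y)
      = (x - y) / ((b * x + 1) * (b * y + 1)) := by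
    field_simp
    ring
  rw [Real.dist_eq, Real.dist_eq, difference_eq, abs_div,
    abs_of_pos (by linarith : 0 < (b * x + 1) * (b * y + 1))]
  gcongr

lemma dist_cfConv_le_one {a : ℕ → ℝ} (ha : ∀ i, 1 ≤ a (i + 1)) (m n : ℕ) :
    dist (cfConv a m) (cfConv a n) ≤ 1 := by
  simpa using Real.dist_le_of_mem_Icc (cfConv_mem_Icc ha m) (cfConv_mem_Icc ha n)

lemma dist_cfConv_succ_le {a : ℕ → ℝ} (ha : ∀ i, 1 ≤ a (i + 1)) (n : ℕ) :
    dist (cfConv a n) (cfConv a (n + 1)) ≤ 2 * (1 / 2) ^ n := by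
  induction n using Nat.twoStepInduction generalizing a with
  | zero => linarith [dist_cfConv_le_one ha 0 1]
  | one => simpa using dist_cfConv_le_one ha 1 2
  | more n ih _ =>
    let b : ℕ → ℝ := fun i => a (i + 2)
    have hb : ∀ i, 1 ≤ b (i + 1) := fun i => ha (i + 2)
    have one_le_cfConv (m : ℕ) : 1 ≤ cfConv b m := (ha 1).trans (cfConv_mem_Icc hb m).1
    calc dist (cfConv a (n + 2)) (cfConv a (n + 3))
        = dist (1 / (a 1 + 1 / cfConv b n)) (1 / (a 1 + 1 / cfConv b (n + 1))) :=
          dist_add_left (a 0) _ _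
      _ ≤ dist (cfConv b n) (cfConv b (n + 1)) / 4 :=
          dist_one_div_add_one_div_le (ha 0) (one_le_cfConv _) (one_le_cfConv _)
      _ ≤ 2 * (1 / 2) ^ n / 4 := by
          gcongr
          exact ih hb
      _ = 2 * (1 / 2) ^ (n + 2) := by ring

lemma tendsto_cfConv {a : ℕ → ℝ} (ha : ∀ i, 1 ≤ a (i + 1)) :
    Tendsto (cfConv a) atTop (nhds (cfVal a)) :=
  tendsto_nhds_limUnder <| cauchySeq_tendsto_of_complete <|
    cauchySeq_of_le_geometric (1 / 2) 2 (by norm_num) (dist_cfConv_succ_le ha)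

lemma cfVal_mem_Icc {a : ℕ → ℝ} (ha : ∀ i, 1 ≤ a (i + 1)) :
    cfVal a ∈ Icc (a 0) (a 0 + 1) :=
  isClosed_Icc.mem_of_tendsto (tendsto_cfConv ha)
    (Eventually.of_forall fun n => cfConv_mem_Icc ha n)

lemma cfVal_eq_add {a : ℕ → ℝ} (ha : ∀ i, 1 ≤ a (i + 1)) :
    cfVal a = a 0 + 1 / cfVal (fun i => a (i + 1)) := by
  let b : ℕ → ℝ := fun i => a (i + 1)
  have hb : ∀ i, 1 ≤ b (i + 1) := fun i => ha (i + 1)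
  have cfVal_ne_zero : cfVal b ≠ 0 := by linarith [ha 0, (cfVal_mem_Icc hb).1]
  have tendsto_tail : Tendsto (fun n => a 0 + 1 / cfConv b n) atTop (nhds (a 0 + 1 / cfVal b)) :=
    tendsto_const_nhds.add (tendsto_const_nhds.div (tendsto_cfConv hb) cfVal_ne_zero)
  exact tendsto_nhds_unique ((tendsto_add_atTop_iff_nat 1).2 (tendsto_cfConv ha)) tendsto_tail

/-! ### Cylinders -/

/-- The finite continued fraction `[0; d₁, …, dₙ + t]` with `w = [d₁, …, dₙ]`. -/
noncomputable def cfPrefix (w : List ℕ) (t : ℝ) : ℝ :=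
  w.foldr (fun (d : ℕ) x => 1 / ((d : ℝ) + x)) t

section cfPrefix

variable {w : List ℕ} {s t : ℝ}

lemma cfPrefix_cons (d : ℕ) (w : List ℕ) (t : ℝ) :
    cfPrefix (d :: w) t = 1 / (d + cfPrefix w t) := rfl

lemma cfPrefix_nonneg (w : List ℕ) (ht : 0 ≤ t) : 0 ≤ cfPrefix w t := by
  induction w with
  | nil => exact ht
  | cons d w ih => rw [cfPrefix_cons]; positivity

lemma cfPrefix_monotoneOn_and_antitoneOn (hw : ∀ d ∈ w, 0 < d) :
    (Even w.length → MonotoneOn (cfPrefix w) (Ici 0)) ∧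
      (Odd w.length → AntitoneOn (cfPrefix w) (Ici 0)) := by
  induction w with
  | nil => exact ⟨fun _ => monotoneOn_id, fun h => absurd h (by decide)⟩
  | cons d w ih =>
    obtain ⟨hd, hw⟩ := List.forall_mem_cons.1 hw
    have antitone_head {x y : ℝ} (hx : 0 ≤ x) (hxy : x ≤ y) : 1 / (d + y) ≤ 1 / (d + x) :=
      one_div_le_one_div_of_le (by positivity) (by gcongr)
    simp only [List.length_cons, Nat.even_add_one, Nat.odd_add_one, Nat.not_even_iff_odd,
      Nat.not_odd_iff_even]
    exact ⟨fun h s hs t ht hst => antitone_head (cfPrefix_nonneg w ht) ((ih hw).2 h hs ht hst),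
      fun h s hs t ht hst => antitone_head (cfPrefix_nonneg w hs) ((ih hw).1 h hs ht hst)⟩

lemma monotoneOn_cfPrefix_of_even (hw : ∀ d ∈ w, 0 < d) (heven : Even w.length) :
    MonotoneOn (cfPrefix w) (Ici 0) :=
  (cfPrefix_monotoneOn_and_antitoneOn hw).1 heven

lemma antitoneOn_cfPrefix_of_odd (hw : ∀ d ∈ w, 0 < d) (hodd : Odd w.length) :
    AntitoneOn (cfPrefix w) (Ici 0) :=
  (cfPrefix_monotoneOn_and_antitoneOn hw).2 hodd

lemma abs_cfPrefix_sub_le (hw : ∀ d ∈ w, 0 < d) (hs : 0 ≤ s) (ht : 0 ≤ t) :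
    |cfPrefix w s - cfPrefix w t| ≤ |s - t| := by
  induction w with
  | nil => rfl
  | cons d w ih =>
    obtain ⟨hd, hw⟩ := List.forall_mem_cons.1 hw
    have one_le_left : 1 ≤ d + cfPrefix w s :=
      le_add_of_le_of_nonneg (by exact_mod_cast hd) (cfPrefix_nonneg w hs)
    have one_le_right : 1 ≤ d + cfPrefix w t :=
      le_add_of_le_of_nonneg (by exact_mod_cast hd) (cfPrefix_nonneg w ht)
    have difference_eq : 1 / (d + cfPrefix w s) - 1 / (d + cfPrefix w t)
        = (cfPrefix w t - cfPrefix w s) / ((d + cfPrefix w s) * (d + cfPrefix w t)) := by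
      field_simp
      ring
    calc |cfPrefix (d :: w) s - cfPrefix (d :: w) t|
        = |cfPrefix w t - cfPrefix w s| / ((d + cfPrefix w s) * (d + cfPrefix w t)) := by
          rw [cfPrefix_cons, cfPrefix_cons, difference_eq, abs_div,
            abs_of_pos (by positivity : 0 < (d + cfPrefix w s) * (d + cfPrefix w t))]
      _ ≤ |cfPrefix w t - cfPrefix w s| :=
          div_le_self (abs_nonneg _) (one_le_mul_of_one_le_of_one_le one_le_left one_le_right)
      _ ≤ |s - t| := by rw [abs_sub_comm]; exact ih hw

lemma monotoneOn_add_cfPrefix (hw : ∀ d ∈ w, 0 < d) :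
    MonotoneOn (fun t => t + cfPrefix w t) (Ici 0) := by
  intro s hs t ht hst
  have := (abs_le.1 (abs_cfPrefix_sub_le hw ht hs)).1
  rw [abs_of_nonneg (sub_nonneg.2 hst)] at this
  dsimp only
  linarith

end cfPrefix

/-! ### Values of sequences of positive digits -/

/-- The value `[0; a 0, a 1, …]`. -/
noncomputable def cfTail (a : ℕ → ℕ) : ℝ := 1 / cfVal fun n => a n

/-- The sequence `a` begins with the digits of the word `w`. -/
def StartsWith : (ℕ → ℕ) → List ℕ → Prop
  | _, [] => True
  | a, d :: w => a 0 = d ∧ StartsWith (fun n => a (n + 1)) w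

section cfTail

variable {a : ℕ → ℕ} {w : List ℕ} {s : ℝ}

lemma one_le_cfVal_natCast (ha : ∀ n, 0 < a n) : 1 ≤ cfVal fun n => (a n : ℝ) := by
  have one_le : ∀ n, (1 : ℝ) ≤ a n := fun n => by exact_mod_cast ha n
  exact (one_le 0).trans (cfVal_mem_Icc (a := fun n => (a n : ℝ)) fun n => one_le (n + 1)).1

lemma cfTail_pos (ha : ∀ n, 0 < a n) : 0 < cfTail a :=
  one_div_pos.2 (zero_lt_one.trans_le (one_le_cfVal_natCast ha))

lemma cfTail_le_one (ha : ∀ n, 0 < a n) : cfTail a ≤ 1 :=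
  div_le_one_of_le₀ (one_le_cfVal_natCast ha) (zero_le_one.trans (one_le_cfVal_natCast ha))

lemma cfTail_eq_one_div_add (ha : ∀ n, 0 < a n) :
    cfTail a = 1 / (a 0 + cfTail fun n => a (n + 1)) := by
  rw [cfTail, cfVal_eq_add fun n => by exact_mod_cast ha (n + 1), cfTail]

namespace StartsWith

lemma pos_of_mem (hw : StartsWith a w) (ha : ∀ n, 0 < a n) : ∀ d ∈ w, 0 < d := by
  induction w generalizing a with
  | nil => simp
  | cons d w ih => exact List.forall_mem_cons.2 ⟨hw.1 ▸ ha 0, ih hw.2 fun n => ha (n + 1)⟩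

lemma cfTail_eq (hw : StartsWith a w) (ha : ∀ n, 0 < a n) :
    cfTail a = cfPrefix w (cfTail fun n => a (n + w.length)) := by
  induction w generalizing a with
  | nil => rfl
  | cons d w ih =>
    rw [cfTail_eq_one_div_add ha, hw.1, ih hw.2 fun n => ha (n + 1), cfPrefix_cons]
    simp only [List.length_cons, add_assoc]

lemma le_cfTail_of_even (hw : StartsWith a w) (ha : ∀ n, 0 < a n) (heven : Even w.length)
    (hs : 0 ≤ s) (hsa : s ≤ cfTail fun n => a (n + w.length)) : cfPrefix w s ≤ cfTail a := by
  rw [hw.cfTail_eq ha]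
  exact monotoneOn_cfPrefix_of_even (hw.pos_of_mem ha) heven hs (hs.trans hsa) hsa

lemma cfTail_le_of_even (hw : StartsWith a w) (ha : ∀ n, 0 < a n) (heven : Even w.length) :
    cfTail a ≤ cfPrefix w 1 := by
  rw [hw.cfTail_eq ha]
  exact monotoneOn_cfPrefix_of_even (hw.pos_of_mem ha) heven
    (cfTail_pos fun n => ha _).le (mem_Ici.2 zero_le_one) (cfTail_le_one fun n => ha _)

lemma le_cfTail_of_odd (hw : StartsWith a w) (ha : ∀ n, 0 < a n) (hodd : Odd w.length) :
    cfPrefix w 1 ≤ cfTail a := by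
  rw [hw.cfTail_eq ha]
  exact antitoneOn_cfPrefix_of_odd (hw.pos_of_mem ha) hodd
    (cfTail_pos fun n => ha _).le (mem_Ici.2 zero_le_one) (cfTail_le_one fun n => ha _)

lemma cfTail_le_of_odd (hw : StartsWith a w) (ha : ∀ n, 0 < a n) (hodd : Odd w.length)
    (hs : 0 ≤ s) (hsa : s ≤ cfTail fun n => a (n + w.length)) : cfTail a ≤ cfPrefix w s := by
  rw [hw.cfTail_eq ha]
  exact antitoneOn_cfPrefix_of_odd (hw.pos_of_mem ha) hodd hs (hs.trans hsa) hsa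

end StartsWith

end cfTail

/-! ### The least tail of a sequence avoiding `2121` -/

/-- A one-sided sequence over `{1, 2}` in which the word `2121` does not occur. -/
structure Avoids2121 (a : ℕ → ℕ) : Prop where
  digit : ∀ n, a n = 1 ∨ a n = 2
  eq_two_of_212 : ∀ n, a n = 2 → a (n + 1) = 1 → a (n + 2) = 2 → a (n + 3) = 2

/-- The value `[0; 2, 1, 2, 2, 2, 1, 2, 2, …]` of the periodic repetition of `2122`, which is the
least value of a sequence avoiding `2121`. -/
noncomputable def minTail : ℝ := √30 / 4 - 1

lemma sqrt_thirty_mem_Ioo : √30 ∈ Ioo (5.477 : ℝ) 5.4773 :=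
  ⟨Real.lt_sqrt_of_sq_lt (by norm_num), (Real.sqrt_lt' (by norm_num)).2 (by norm_num)⟩

lemma minTail_mem_Ioo : minTail ∈ Ioo (1 / 3 : ℝ) (3 / 8) := by
  obtain ⟨sqrt_gt, sqrt_lt⟩ := sqrt_thirty_mem_Ioo
  constructor <;> unfold minTail <;> linarith

lemma minTail_nonneg : 0 ≤ minTail := by linarith [minTail_mem_Ioo.1]

lemma cfPrefix_two_minTail : cfPrefix [2] minTail = (2 * √30 - 8) / 7 := by
  have sqrt_gt := sqrt_thirty_mem_Ioo.1
  have value_nil : cfPrefix [] minTail = √30 / 4 - 1 := rfl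
  rw [cfPrefix_cons, value_nil, Nat.cast_ofNat, div_eq_iff (by linarith)]
  linear_combination (-(1 / 14)) * Real.mul_self_sqrt (show (0 : ℝ) ≤ 30 by norm_num)

lemma cfPrefix_122_minTail : cfPrefix [1, 2, 2] minTail = (2 * √30 - 6) / 7 := by
  have sqrt_gt := sqrt_thirty_mem_Ioo.1
  have sq_sqrt := Real.mul_self_sqrt (show (0 : ℝ) ≤ 30 by norm_num)
  have value_22 : cfPrefix [2, 2] minTail = (√30 - 3) / 6 := by
    rw [cfPrefix_cons, cfPrefix_two_minTail, Nat.cast_ofNat, div_eq_iff (by linarith)]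
    linear_combination (-(1 / 21)) * sq_sqrt
  rw [cfPrefix_cons, value_22, Nat.cast_one, div_eq_iff (by linarith)]
  linear_combination (-(1 / 21)) * sq_sqrt

lemma cfPrefix_1122_minTail : cfPrefix [1, 1, 2, 2] minTail = (2 * √30 - 1) / 17 := by
  have sqrt_gt := sqrt_thirty_mem_Ioo.1
  rw [cfPrefix_cons, cfPrefix_122_minTail, Nat.cast_one, div_eq_iff (by linarith)]
  linear_combination (-(4 / 119)) * Real.mul_self_sqrt (show (0 : ℝ) ≤ 30 by norm_num)

lemma cfPrefix_2122_eq {t : ℝ} (ht : 0 ≤ t) :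
    cfPrefix [2, 1, 2, 2] t = (7 + 3 * t) / (19 + 8 * t) := by
  simp only [cfPrefix, List.foldr_cons, List.foldr_nil, Nat.cast_ofNat, Nat.cast_one]
  field_simp
  ring

lemma cfPrefix_112_eq {t : ℝ} (ht : 0 ≤ t) :
    cfPrefix [1, 1, 2] t = (3 + t) / (5 + 2 * t) := by
  simp only [cfPrefix, List.foldr_cons, List.foldr_nil, Nat.cast_ofNat, Nat.cast_one]
  field_simp
  ring

lemma factor_minTail (t : ℝ) :
    (19 + 8 * t) * t - (7 + 3 * t) = 8 * ((t - minTail) * (t + √30 / 4 + 1)) := by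
  unfold minTail
  linear_combination (1 / 2) * Real.mul_self_sqrt (show (0 : ℝ) ≤ 30 by norm_num)

lemma minTail_le_of_cfPrefix_le {t : ℝ} (ht : 0 ≤ t) (h : cfPrefix [2, 1, 2, 2] t ≤ t) :
    minTail ≤ t := by
  rw [cfPrefix_2122_eq ht, div_le_iff₀ (by positivity)] at h
  have product_nonneg : 0 ≤ (t - minTail) * (t + √30 / 4 + 1) := by linarith [factor_minTail t]
  exact sub_nonneg.1 (nonneg_of_mul_nonneg_left product_nonneg (by positivity))

lemma eq_minTail_of_cfPrefix_eq {t : ℝ} (ht : 0 ≤ t) (h : cfPrefix [2, 1, 2, 2] t = t) :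
    t = minTail := by
  rw [cfPrefix_2122_eq ht, div_eq_iff (by positivity)] at h
  have product_eq_zero : (t - minTail) * (t + √30 / 4 + 1) = 0 := by linarith [factor_minTail t]
  exact sub_eq_zero.1 ((mul_eq_zero.1 product_eq_zero).resolve_right (by positivity))

lemma cfTail_eq_minTail {a : ℕ → ℕ} (ha : ∀ n, 0 < a n) (hstart : StartsWith a [2, 1, 2, 2])
    (hperiod : ∀ n, a (n + 4) = a n) : cfTail a = minTail := by
  refine eq_minTail_of_cfPrefix_eq (cfTail_pos ha).le ?_
  simpa only [List.length_cons, List.length_nil, zero_add, Nat.reduceAdd, hperiod]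
    using (hstart.cfTail_eq ha).symm

namespace Avoids2121

variable {a : ℕ → ℕ}

lemma pos (h : Avoids2121 a) (n : ℕ) : 0 < a n := by
  rcases h.digit n with hn | hn <;> omega

lemma drop (h : Avoids2121 a) (k : ℕ) : Avoids2121 fun n => a (n + k) where
  digit n := h.digit (n + k)
  eq_two_of_212 n := by simpa only [add_right_comm n _ k] using h.eq_two_of_212 (n + k)

lemma startsWith_2122_or_three_eighths_le (h : Avoids2121 a) :
    StartsWith a [2, 1, 2, 2] ∨ 3 / 8 ≤ cfTail a := by
  rcases h.digit 0 with h0 | h0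
  · have hw : StartsWith a [1] := ⟨h0, trivial⟩
    exact Or.inr (le_trans (by norm_num [cfPrefix]) (hw.le_cfTail_of_odd h.pos (by decide)))
  rcases h.digit 1 with h1 | h1
  · rcases h.digit 2 with h2 | h2
    · have hw : StartsWith a [2, 1, 1] := ⟨h0, h1, h2, trivial⟩
      exact Or.inr (le_trans (by norm_num [cfPrefix]) (hw.le_cfTail_of_odd h.pos (by decide)))
    · exact Or.inl ⟨h0, h1, h2, h.eq_two_of_212 0 h0 h1 h2, trivial⟩
  · have hw : StartsWith a [2, 2] := ⟨h0, h1, trivial⟩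
    exact Or.inr (le_trans (by norm_num [cfPrefix]) (hw.le_cfTail_of_even h.pos (by decide) le_rfl
      (cfTail_pos fun n => h.pos _).le))

lemma minTail_le_cfTail (h : Avoids2121 a) : minTail ≤ cfTail a := by
  let tail (k : ℕ) : ℝ := cfTail fun n => a (n + k)
  let m : ℝ := ⨅ k, tail k
  have tail_nonneg (k : ℕ) : 0 ≤ tail k := (cfTail_pos fun n => h.pos (n + k)).le
  have m_le (k : ℕ) : m ≤ tail k := ciInf_le ⟨0, forall_mem_range.2 tail_nonneg⟩ k
  have m_nonneg : 0 ≤ m := le_ciInf tail_nonneg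
  have lower_bound (k : ℕ) : cfPrefix [2, 1, 2, 2] m ≤ tail k := by
    rcases (h.drop k).startsWith_2122_or_three_eighths_le with hstart | three_eighths_le
    · have m_le_rest : m ≤ cfTail fun n => a (n + 4 + k) := by
        simpa only [tail, add_assoc] using m_le (4 + k)
      exact hstart.le_cfTail_of_even (h.drop k).pos (by decide) m_nonneg m_le_rest
    · refine le_trans ?_ three_eighths_le
      rw [cfPrefix_2122_eq m_nonneg, div_le_div_iff₀ (by positivity) (by norm_num)]
      linarith
  exact (minTail_le_of_cfPrefix_le m_nonneg (le_ciInf lower_bound)).trans (m_le 0)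

lemma cfTail_le_of_two (h : Avoids2121 a) (h0 : a 0 = 2) : cfTail a ≤ cfPrefix [2] minTail :=
  have hw : StartsWith a [2] := ⟨h0, trivial⟩
  hw.cfTail_le_of_odd h.pos (by decide) minTail_nonneg (h.drop 1).minTail_le_cfTail

lemma cfTail_le_of_one (h : Avoids2121 a) (h0 : a 0 = 1) (h12 : a 1 = 2 → a 2 = 2) :
    cfTail a ≤ cfPrefix [1, 2, 2] minTail := by
  rcases h.digit 1 with h1 | h1
  · have hw : StartsWith a [1, 1] := ⟨h0, h1, trivial⟩
    have le_two_thirds : cfTail a ≤ 2 / 3 :=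
      (hw.cfTail_le_of_even h.pos (by decide)).trans (by norm_num [cfPrefix])
    rw [cfPrefix_122_minTail]
    linarith [sqrt_thirty_mem_Ioo.1]
  · have hw : StartsWith a [1, 2, 2] := ⟨h0, h1, h12 h1, trivial⟩
    exact hw.cfTail_le_of_odd h.pos (by decide) minTail_nonneg (h.drop 3).minTail_le_cfTail

lemma le_cfTail_of_startsWith_1122 (h : Avoids2121 a) (hw : StartsWith a [1, 1, 2, 2]) :
    cfPrefix [1, 1, 2, 2] minTail ≤ cfTail a :=
  hw.le_cfTail_of_even h.pos (by decide) minTail_nonneg (h.drop 4).minTail_le_cfTail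

end Avoids2121

/-! ### Bi-infinite sequences -/

/-- The digits of `α` met when leaving the position `k` in the direction `ε = ±1`. -/
def digitRay (α : ℤ → ℕ) (k : ℤ) (ε : ℤˣ) (n : ℕ) : ℕ := α (k + ε * (n + 1))

/-- The position `k` carries the central `2` of a word `121`. -/
structure IsIsolatedTwo (α : ℤ → ℕ) (k : ℤ) : Prop where
  eq_two : α k = 2
  neighbour : ∀ ε : ℤˣ, α (k + ε) = 1

/-- A bi-infinite sequence over `{1, 2}` containing neither `2121` nor `1212`: every word `121`
extends to `11211`. -/
structure AvoidsAlternating (α : ℤ → ℕ) : Prop where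
  digit : ∀ k, α k = 1 ∨ α k = 2
  eq_one : ∀ k, IsIsolatedTwo α k → ∀ ε : ℤˣ, α (k + ε * 2) = 1

section BiInfinite

variable {α : ℤ → ℕ}

lemma IsIsolatedTwo.of_add_of_sub {k : ℤ} (hk : α k = 2) {ε : ℤˣ} (hadd : α (k + ε) = 1)
    (hsub : α (k - ε) = 1) : IsIsolatedTwo α k := by
  refine ⟨hk, fun δ => ?_⟩
  rcases (by decide : ∀ ε δ : ℤˣ, δ = ε ∨ δ = -ε) ε δ with rfl | rfl
  · exact hadd
  · rwa [Units.val_neg, ← sub_eq_add_neg]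

lemma digitRay_pos (hα : ∀ n, 0 < α n) (k : ℤ) (ε : ℤˣ) (n : ℕ) : 0 < digitRay α k ε n := hα _

lemma cfTail_digitRay_nonneg (hα : ∀ n, 0 < α n) (k : ℤ) (ε : ℤˣ) :
    0 ≤ cfTail (digitRay α k ε) := (cfTail_pos (digitRay_pos hα k ε)).le

lemma lambdaVal_eq (hα : ∀ n, 0 < α n) (k : ℤ) (ε : ℤˣ) :
    lambdaVal α k = α k + cfTail (digitRay α k ε) + cfTail (digitRay α k (-ε)) := by
  have one_le (n : ℤ) : (1 : ℝ) ≤ α n := by exact_mod_cast hα n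
  have right_eq : cfVal (fun n => (α (k + n) : ℝ)) = α k + cfTail (digitRay α k 1) := by
    rw [cfVal_eq_add fun _ => one_le _]
    simp [cfTail, digitRay]
  have left_eq : cfVal (fun n => if n = 0 then 0 else (α (k - n) : ℝ))
      = cfTail (digitRay α k (-1)) := by
    rw [cfVal_eq_add fun i => by simpa using one_le (k - (i + 1))]
    simp [cfTail, digitRay, sub_eq_add_neg]
  rcases Int.units_eq_one_or ε with rfl | rfl
  · rw [lambdaVal, right_eq, left_eq]
  · rw [lambdaVal, right_eq, left_eq, neg_neg, add_right_comm]

lemma digitRay_add (α : ℤ → ℕ) (k : ℤ) (ε : ℤˣ) (m : ℕ) :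
    (fun n => digitRay α k ε (n + m)) = digitRay α (k + ε * m) ε := by
  funext n
  simp only [digitRay, Nat.cast_add]
  congr 1
  ring

lemma StartsWith.cfTail_digitRay_eq {k : ℤ} {ε : ℤˣ} {w : List ℕ}
    (hw : StartsWith (digitRay α k ε) w) (hα : ∀ n, 0 < α n) :
    cfTail (digitRay α k ε) = cfPrefix w (cfTail (digitRay α (k + ε * w.length) ε)) := by
  rw [hw.cfTail_eq (digitRay_pos hα k ε), digitRay_add]

/-- The left end of the gap: the value at a `2` whose neighbours are `2` and `1`, both rays being
as large as possible among sequences avoiding `2121`. -/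
noncomputable def lowerEndpoint : ℝ := 2 + cfPrefix [2] minTail + cfPrefix [1, 2, 2] minTail

lemma lowerEndpoint_eq : lowerEndpoint = 4 * √30 / 7 := by
  rw [lowerEndpoint, cfPrefix_two_minTail, cfPrefix_122_minTail]
  ring

lemma three_le_lowerEndpoint : 3 ≤ lowerEndpoint := by
  rw [lowerEndpoint_eq]
  linarith [sqrt_thirty_mem_Ioo.1]

lemma lambdaVal_le_three (hα : ∀ n, 0 < α n) {k : ℤ} (hk : α k = 1) : lambdaVal α k ≤ 3 := by
  have right_le := cfTail_le_one (digitRay_pos hα k 1)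
  have left_le := cfTail_le_one (digitRay_pos hα k (-1))
  rw [lambdaVal_eq hα k 1, hk, Nat.cast_one]
  linarith

namespace AvoidsAlternating

lemma pos (h : AvoidsAlternating α) (k : ℤ) : 0 < α k := by
  rcases h.digit k with hk | hk <;> omega

lemma avoids2121_digitRay (h : AvoidsAlternating α) (k : ℤ) (ε : ℤˣ) :
    Avoids2121 (digitRay α k ε) where
  digit n := h.digit _
  eq_two_of_212 n h0 h1 h2 := by
    refine (h.digit _).resolve_left fun h3 => ?_
    dsimp only [digitRay] at h0 h1 h2
    have isolated : IsIsolatedTwo α (k + ε * (n + 3)) := by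
      refine .of_add_of_sub (ε := ε) ?_ ?_ ?_
      · convert h2 using 2; push_cast; ring
      · convert h3 using 2; push_cast; ring
      · convert h1 using 2; push_cast; ring
    have eq_one : α (k + ε * (n + 1)) = 1 := by
      convert h.eq_one _ isolated (-ε) using 2; push_cast; ring
    omega

lemma cfTail_digitRay_le (h : AvoidsAlternating α) {k : ℤ} (hk : α k = 2) (ε : ℤˣ) :
    cfTail (digitRay α k ε) ≤ cfPrefix [1, 2, 2] minTail := by
  have avoids := h.avoids2121_digitRay k ε
  have forced := (h.avoids2121_digitRay (k - ε) ε).eq_two_of_212 0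
  have shift (n : ℕ) : digitRay α (k - ε) ε (n + 1) = digitRay α k ε n := by
    simp only [digitRay, Nat.cast_add, Nat.cast_one]
    congr 1
    ring
  rcases avoids.digit 0 with h1 | h2
  · exact avoids.cfTail_le_of_one h1 fun h12 =>
      (shift 2).symm.trans (forced (by simpa [digitRay] using hk) ((shift 0).trans h1)
        ((shift 1).trans h12))
  · refine (avoids.cfTail_le_of_two h2).trans ?_
    rw [cfPrefix_two_minTail, cfPrefix_122_minTail]
    linarith

lemma lambdaVal_le_or_isIsolatedTwo (h : AvoidsAlternating α) (k : ℤ) :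
    lambdaVal α k ≤ lowerEndpoint ∨ IsIsolatedTwo α k := by
  rcases h.digit k with h1 | h2
  · exact Or.inl ((lambdaVal_le_three h.pos h1).trans three_le_lowerEndpoint)
  refine or_iff_not_imp_right.2 fun not_isolated => ?_
  obtain ⟨ε, hε⟩ : ∃ ε : ℤˣ, α (k + ε) ≠ 1 := by
    by_contra! neighbour
    exact not_isolated ⟨h2, neighbour⟩
  have neighbour_le := (h.avoids2121_digitRay k ε).cfTail_le_of_two
    (by simpa [digitRay] using (h.digit _).resolve_left hε)
  have opposite_le := h.cfTail_digitRay_le h2 (-ε)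
  rw [lambdaVal_eq h.pos k ε, h2, Nat.cast_ofNat, lowerEndpoint]
  linarith

end AvoidsAlternating

/-! ### Sequences whose Markov value lies below the upper endpoint -/

/-- The right end of the gap: the value at either `2` of the word `2112` when this word is
prolonged on both sides by `1122` and then by the least possible tails. -/
noncomputable def upperEndpoint : ℝ :=
  2 + cfPrefix [1, 1, 2, 2] minTail + cfPrefix [1, 1, 2] (cfPrefix [1, 1, 2, 2] minTail)

lemma upperEndpoint_eq : upperEndpoint = (16351 + 720 * √30) / 6409 := by
  have sqrt_gt := sqrt_thirty_mem_Ioo.1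
  have value_112 : cfPrefix [1, 1, 2] ((2 * √30 - 1) / 17) = (230 - 2 * √30) / 377 := by
    rw [cfPrefix_112_eq (by linarith), div_eq_iff (by linarith)]
    linear_combination (8 / 6409) * Real.mul_self_sqrt (show (0 : ℝ) ≤ 30 by norm_num)
  rw [upperEndpoint, cfPrefix_1122_minTail, value_112]
  ring

lemma upperEndpoint_lt : upperEndpoint < 3.1666 := by
  rw [upperEndpoint_eq]
  linarith [sqrt_thirty_mem_Ioo.2]

lemma add_le_max_of_antitoneOn {M : Type*} [AddCommMonoid M] [LinearOrder M]
    [IsOrderedAddMonoid M] {f : M → M} {s : Set M} (hf : AntitoneOn f s)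
    (hadd : MonotoneOn (fun t => t + f t) s) {a x y : M} (ha : a ∈ s) (hx : x ∈ s) (hy : y ∈ s)
    (hax : a ≤ x) : a + f a ≤ max (x + f y) (y + f x) := by
  rcases le_total x y with hxy | hyx
  · exact (hadd ha hx hax).trans <| le_max_of_le_right <| add_le_add_left hxy (f x)
  · exact (hadd ha hx hax).trans <| le_max_of_le_left <| add_le_add_right (hf hy hx hyx) x

/-- A bi-infinite sequence of positive digits all of whose values lie below `upperEndpoint`. -/
structure BelowUpperEndpoint (α : ℤ → ℕ) : Prop where
  pos : ∀ k, 0 < α k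
  lt : ∀ k, lambdaVal α k < upperEndpoint

namespace BelowUpperEndpoint

lemma digit (h : BelowUpperEndpoint α) (k : ℤ) : α k = 1 ∨ α k = 2 := by
  have le_three (m : ℤ) : α m ≤ 3 := by
    by_contra! four_le
    have four_le_cast : (4 : ℝ) ≤ α m := by exact_mod_cast four_le
    have value_lt := h.lt m
    rw [lambdaVal_eq h.pos m 1] at value_lt
    linarith [cfTail_digitRay_nonneg h.pos m 1, cfTail_digitRay_nonneg h.pos m (-1),
      upperEndpoint_lt]
  suffices α k ≠ 3 by have := h.pos k; have := le_three k; omega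
  intro eq_three
  have hw : StartsWith (digitRay α k 1) [digitRay α k 1 0] := ⟨rfl, trivial⟩
  have digit_le : (digitRay α k 1 0 : ℝ) ≤ 3 := by exact_mod_cast le_three _
  have quarter_le : 1 / 4 ≤ cfTail (digitRay α k 1) :=
    calc (1 / 4 : ℝ) ≤ 1 / (digitRay α k 1 0 + 1) :=
          one_div_le_one_div_of_le (by positivity) (by linarith)
      _ ≤ cfTail (digitRay α k 1) := hw.le_cfTail_of_odd (digitRay_pos h.pos k 1) odd_one
  have value_lt := h.lt k
  rw [lambdaVal_eq h.pos k 1, eq_three, Nat.cast_ofNat] at value_lt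
  linarith [cfTail_digitRay_nonneg h.pos k (-1), upperEndpoint_lt]

lemma digit_add_two_eq_one (h : BelowUpperEndpoint α) {k : ℤ} (hk : IsIsolatedTwo α k)
    (ε : ℤˣ) : α (k + ε * 2) = 1 := by
  by_contra! ne_one
  have hray : StartsWith (digitRay α k ε) [1, 2] :=
    ⟨by simpa [digitRay] using hk.neighbour ε,
      by simpa [digitRay] using (h.digit _).resolve_left ne_one, trivial⟩
  have hopposite : StartsWith (digitRay α k (-ε)) [1] :=
    ⟨by simpa [digitRay] using hk.neighbour (-ε), trivial⟩
  have ray_ge : 2 / 3 ≤ cfTail (digitRay α k ε) :=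
    le_trans (by norm_num [cfPrefix]) <| hray.le_cfTail_of_even (digitRay_pos h.pos k ε)
      (by decide) le_rfl (cfTail_pos fun _ => h.pos _).le
  have opposite_ge : 1 / 2 ≤ cfTail (digitRay α k (-ε)) :=
    le_trans (by norm_num [cfPrefix]) <|
      hopposite.le_cfTail_of_odd (digitRay_pos h.pos k (-ε)) (by decide)
  have value_eq := lambdaVal_eq h.pos k ε
  rw [hk.eq_two, Nat.cast_ofNat] at value_eq
  linarith [h.lt k, upperEndpoint_lt]

lemma avoidsAlternating (h : BelowUpperEndpoint α) : AvoidsAlternating α :=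
  ⟨h.digit, fun _ => h.digit_add_two_eq_one⟩

lemma digit_add_three_eq_two (h : BelowUpperEndpoint α) {k : ℤ} (hk : IsIsolatedTwo α k)
    (ε : ℤˣ) : α (k + ε * 3) = 2 := by
  by_contra! ne_two
  have hopposite : StartsWith (digitRay α k (-ε)) [1, 1] :=
    ⟨by simpa [digitRay] using hk.neighbour (-ε),
      by simpa [digitRay] using h.digit_add_two_eq_one hk (-ε), trivial⟩
  have hray : StartsWith (digitRay α k ε) [1, 1, 1] :=
    ⟨by simpa [digitRay] using hk.neighbour ε,
      by simpa [digitRay] using h.digit_add_two_eq_one hk ε,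
      by simpa [digitRay] using (h.digit _).resolve_right ne_two, trivial⟩
  have third_le := minTail_mem_Ioo.1.le.trans
    ((h.avoidsAlternating.avoids2121_digitRay k (-ε)).drop 2).minTail_le_cfTail
  have ray_ge : 3 / 5 ≤ cfTail (digitRay α k ε) :=
    le_trans (by norm_num [cfPrefix]) <|
      hray.le_cfTail_of_odd (digitRay_pos h.pos k ε) (by decide)
  have opposite_ge : 4 / 7 ≤ cfTail (digitRay α k (-ε)) :=
    le_trans (by norm_num [cfPrefix]) <| hopposite.le_cfTail_of_even
      (digitRay_pos h.pos k (-ε)) (by decide) (by norm_num) third_le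
  have value_eq := lambdaVal_eq h.pos k ε
  rw [hk.eq_two, Nat.cast_ofNat] at value_eq
  linarith [h.lt k, upperEndpoint_lt]

lemma startsWith_112 (h : BelowUpperEndpoint α) {k : ℤ} (hk : IsIsolatedTwo α k)
    (ε : ℤˣ) : StartsWith (digitRay α k ε) [1, 1, 2] :=
  ⟨by simpa [digitRay] using hk.neighbour ε,
    by simpa [digitRay] using h.digit_add_two_eq_one hk ε,
    by simpa [digitRay] using h.digit_add_three_eq_two hk ε, trivial⟩

lemma lambdaVal_eq_of_isIsolatedTwo (h : BelowUpperEndpoint α) {k : ℤ} (hk : IsIsolatedTwo α k)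
    (ε : ℤˣ) : lambdaVal α k = 2 + cfTail (digitRay α k ε) +
      cfPrefix [1, 1, 2] (cfTail (digitRay α (k - ε * 3) (-ε))) := by
  rw [lambdaVal_eq h.pos k ε, hk.eq_two, (h.startsWith_112 hk (-ε)).cfTail_digitRay_eq h.pos]
  simp [sub_eq_add_neg]

lemma lambdaVal_sub_three_eq_of_isIsolatedTwo (h : BelowUpperEndpoint α) {k : ℤ}
    (hk : IsIsolatedTwo α k) (ε : ℤˣ) : lambdaVal α (k - ε * 3) =
      2 + cfTail (digitRay α (k - ε * 3) (-ε)) +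
        cfPrefix [1, 1, 2] (cfTail (digitRay α k ε)) := by
  have eq_two : α (k - ε * 3) = 2 := by
    simpa [sub_eq_add_neg] using h.digit_add_three_eq_two hk (-ε)
  have hback : StartsWith (digitRay α (k - ε * 3) ε) [1, 1, 2] := by
    simp only [StartsWith, digitRay]
    refine ⟨?_, ?_, ?_, trivial⟩
    · convert h.digit_add_two_eq_one hk (-ε) using 2; push_cast; ring
    · convert hk.neighbour (-ε) using 2; push_cast; ring
    · convert hk.eq_two using 2; push_cast; ring
  rw [lambdaVal_eq h.pos _ (-ε), neg_neg, eq_two, hback.cfTail_digitRay_eq h.pos]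
  simp

lemma digit_add_four_eq_one (h : BelowUpperEndpoint α) {k : ℤ}
    (hk : IsIsolatedTwo α k) (ε : ℤˣ) : α (k + ε * 4) = 1 := by
  by_contra! ne_one
  have avoids := h.avoidsAlternating.avoids2121_digitRay k ε
  have ray_ge : cfPrefix [1, 1, 2, 2] minTail ≤ cfTail (digitRay α k ε) := by
    obtain ⟨h0, h1, h2, -⟩ := h.startsWith_112 hk ε
    exact avoids.le_cfTail_of_startsWith_1122
      ⟨h0, h1, h2, (h.digit _).resolve_left ne_one, trivial⟩
  have endpoint_le_max : _ ≤ max (_ + cfPrefix [1, 1, 2] _) (_ + cfPrefix [1, 1, 2] _) :=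
    add_le_max_of_antitoneOn (antitoneOn_cfPrefix_of_odd (by decide) (by decide))
      (monotoneOn_add_cfPrefix (by decide)) (cfPrefix_nonneg _ minTail_nonneg)
      (cfTail_digitRay_nonneg h.pos k ε) (cfTail_digitRay_nonneg h.pos (k - ε * 3) (-ε)) ray_ge
  have max_lt_endpoint := max_lt (h.lt k) (h.lt (k - ε * 3))
  rw [h.lambdaVal_eq_of_isIsolatedTwo hk ε, h.lambdaVal_sub_three_eq_of_isIsolatedTwo hk ε,
    add_assoc, add_assoc, max_add_add_left, upperEndpoint, add_assoc] at max_lt_endpoint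
  linarith

lemma isIsolatedTwo_add_three (h : BelowUpperEndpoint α) {k : ℤ} (hk : IsIsolatedTwo α k) (ε : ℤˣ) :
    IsIsolatedTwo α (k + ε * 3) := by
  refine .of_add_of_sub (ε := ε) (h.digit_add_three_eq_two hk ε) ?_ ?_
  · convert h.digit_add_four_eq_one hk ε using 2; ring
  · convert h.digit_add_two_eq_one hk ε using 2; ring

lemma isIsolatedTwo_add_three_mul (h : BelowUpperEndpoint α) {k : ℤ} (hk : IsIsolatedTwo α k)
    (m : ℤ) : IsIsolatedTwo α (k + 3 * m) := by
  induction m using Int.induction_on with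
  | zero => simpa using hk
  | succ m ih => convert h.isIsolatedTwo_add_three ih 1 using 1; push_cast; ring
  | pred m ih => convert h.isIsolatedTwo_add_three ih (-1) using 1; push_cast; ring

lemma eq_ite (h : BelowUpperEndpoint α) {k : ℤ} (hk : IsIsolatedTwo α k) (n : ℤ) :
    α n = if 3 ∣ n - k then 2 else 1 := by
  have isolated := h.isIsolatedTwo_add_three_mul hk
  obtain ⟨m, rfl | rfl | rfl⟩ : ∃ m, n = k + 3 * m ∨ n = k + 3 * m + 1 ∨ n = k + 3 * m - 1 :=
    ⟨(n - k + 1) / 3, by omega⟩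
  · rw [(isolated m).eq_two, if_pos (by omega)]
  · rw [if_neg (by omega)]
    exact (isolated m).neighbour 1
  · rw [if_neg (by omega)]
    exact (isolated m).neighbour (-1)

end BelowUpperEndpoint

/-! ### Three points of the spectrum -/

lemma mem_markovSpectrum_of_isGreatest (hα : ∀ n, 0 < α n) {c : ℝ}
    (hc : IsGreatest (range (lambdaVal α)) c) : c ∈ markovSpectrum :=
  ⟨α, hα, hc.bddAbove, hc.csSup_eq⟩

lemma sqrt_ten_mem_Ioo : √10 ∈ Ioo (3.16 : ℝ) 3.164 :=
  ⟨Real.lt_sqrt_of_sq_lt (by norm_num), (Real.sqrt_lt' (by norm_num)).2 (by norm_num)⟩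

lemma sqrt_ten_mem_gap : √10 ∈ Ioo lowerEndpoint upperEndpoint := by
  obtain ⟨sqrt_gt, sqrt_lt⟩ := sqrt_ten_mem_Ioo
  obtain ⟨sqrt_thirty_gt, sqrt_thirty_lt⟩ := sqrt_thirty_mem_Ioo
  rw [lowerEndpoint_eq, upperEndpoint_eq]
  constructor <;> linarith

lemma cfTail_eq_of_periodic_112 {a : ℕ → ℕ} (ha : ∀ n, 0 < a n)
    (hstart : StartsWith a [1, 1, 2]) (hperiod : ∀ n, a (n + 3) = a n) :
    cfTail a = √10 / 2 - 1 := by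
  have tail_pos := cfTail_pos ha
  have fixed := hstart.cfTail_eq ha
  simp only [List.length_cons, List.length_nil, zero_add, Nat.reduceAdd, hperiod] at fixed
  rw [cfPrefix_112_eq tail_pos.le, eq_div_iff (by positivity)] at fixed
  have root_eq : √10 = 2 * cfTail a + 2 :=
    (Real.sqrt_eq_iff_mul_self_eq (by norm_num) (by positivity)).2 (by linarith)
  linarith

lemma lambdaVal_eq_sqrt_ten {k : ℤ} (hα : ∀ n, α n = if 3 ∣ n - k then 2 else 1) :
    lambdaVal α k = √10 := by
  have pos (n : ℤ) : 0 < α n := by rw [hα]; split_ifs <;> decide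
  have ray_eq (ε : ℤˣ) (n : ℕ) : digitRay α k ε n = if 3 ∣ n + 1 then 2 else 1 := by
    simp only [digitRay, hα, add_sub_cancel_left, Units.dvd_mul_left]
    norm_cast
  have ray_value (ε : ℤˣ) : cfTail (digitRay α k ε) = √10 / 2 - 1 := by
    refine cfTail_eq_of_periodic_112 (digitRay_pos pos k ε) (by simp [StartsWith, ray_eq])
      fun n => ?_
    simp only [ray_eq, add_right_comm n 3, Nat.dvd_add_self_right]
  rw [lambdaVal_eq pos k 1, ray_value, ray_value, hα, sub_self, if_pos (dvd_zero 3)]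
  push_cast
  ring

lemma sqrt_ten_mem_markovSpectrum : √10 ∈ markovSpectrum := by
  let α (n : ℤ) : ℕ := if 3 ∣ n then 2 else 1
  have pos (n : ℤ) : 0 < α n := by dsimp only [α]; split_ifs <;> decide
  have value_eq {k : ℤ} (hk : 3 ∣ k) : lambdaVal α k = √10 :=
    lambdaVal_eq_sqrt_ten fun n => by simp only [α, dvd_sub_left hk]
  refine mem_markovSpectrum_of_isGreatest pos
    ⟨⟨0, value_eq (dvd_zero 3)⟩, forall_mem_range.2 fun k => ?_⟩
  by_cases hk : 3 ∣ k
  · exact (value_eq hk).le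
  · exact (lambdaVal_le_three pos (if_neg hk)).trans (by linarith [sqrt_ten_mem_Ioo.1])

/-- The periodic repetition of `1222`, all of whose values are at most `lowerEndpoint`. -/
def lowerSequence (n : ℤ) : ℕ := if 4 ∣ n then 1 else 2

lemma digitRay_lowerSequence_add_four (k : ℤ) (ε : ℤˣ) (n : ℕ) :
    digitRay lowerSequence k ε (n + 4) = digitRay lowerSequence k ε n := by
  have shift : k + ε * (((n + 4 : ℕ) : ℤ) + 1) = k + ε * (n + 1) + ε * 4 := by push_cast; ring
  simp only [digitRay, lowerSequence, shift, dvd_add_left (dvd_mul_left (4 : ℤ) ε)]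

lemma not_isIsolatedTwo_lowerSequence (k : ℤ) : ¬ IsIsolatedTwo lowerSequence k := by
  intro hk
  have next_eq := hk.neighbour 1
  have prev_eq := hk.neighbour (-1)
  simp only [lowerSequence, Units.val_one, Units.val_neg] at next_eq prev_eq
  split_ifs at next_eq prev_eq <;> omega

lemma avoidsAlternating_lowerSequence : AvoidsAlternating lowerSequence where
  digit k := by unfold lowerSequence; split_ifs <;> simp
  eq_one k hk := absurd hk (not_isIsolatedTwo_lowerSequence k)

lemma lambdaVal_lowerSequence_one : lambdaVal lowerSequence 1 = lowerEndpoint := by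
  have pos := avoidsAlternating_lowerSequence.pos
  have right_start : StartsWith (digitRay lowerSequence 1 1) [2] := ⟨rfl, trivial⟩
  have left_start : StartsWith (digitRay lowerSequence 1 (-1)) [1, 2, 2] := ⟨rfl, rfl, rfl, trivial⟩
  have tail_eq (k : ℤ) (ε : ℤˣ) (hstart : StartsWith (digitRay lowerSequence k ε) [2, 1, 2, 2]) :
      cfTail (digitRay lowerSequence k ε) = minTail :=
    cfTail_eq_minTail (digitRay_pos pos k ε) hstart (digitRay_lowerSequence_add_four k ε)
  rw [lambdaVal_eq pos 1 1, right_start.cfTail_digitRay_eq pos, left_start.cfTail_digitRay_eq pos,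
    tail_eq, tail_eq, lowerEndpoint]
  · rfl
  · exact ⟨rfl, rfl, rfl, rfl, trivial⟩
  · exact ⟨rfl, rfl, rfl, rfl, trivial⟩

lemma lowerEndpoint_mem_markovSpectrum : lowerEndpoint ∈ markovSpectrum :=
  have h := avoidsAlternating_lowerSequence
  mem_markovSpectrum_of_isGreatest h.pos ⟨⟨1, lambdaVal_lowerSequence_one⟩,
    forall_mem_range.2 fun k =>
      (h.lambdaVal_le_or_isIsolatedTwo k).resolve_right (not_isIsolatedTwo_lowerSequence k)⟩

/-- The sequence that reads `2112` on the positions `0, …, 3`, continues on both sides with `1122`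
and then with the periodic repetition of `2122`. It is invariant under `n ↦ 3 - n`, so its digits
depend only on `max n (3 - n)`. -/
def upperSequence (n : ℤ) : ℕ :=
  if max n (3 - n) % 4 = 1 ∨ max n (3 - n) = 2 ∨ max n (3 - n) = 4 then 1 else 2

lemma isIsolatedTwo_upperSequence {k : ℤ} (hk : IsIsolatedTwo upperSequence k) :
    k = 0 ∨ k = 3 := by
  have center_eq := hk.eq_two
  have next_eq := hk.neighbour 1
  have prev_eq := hk.neighbour (-1)
  simp only [upperSequence, Units.val_neg, Units.val_one] at center_eq next_eq prev_eq
  split_ifs at center_eq next_eq prev_eq <;> omega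

lemma avoidsAlternating_upperSequence : AvoidsAlternating upperSequence where
  digit k := by unfold upperSequence; split_ifs <;> simp
  eq_one k hk ε := by
    rcases isIsolatedTwo_upperSequence hk with rfl | rfl <;>
      rcases Int.units_eq_one_or ε with rfl | rfl <;> decide

lemma digitRay_upperSequence_three (ε : ℤˣ) :
    digitRay upperSequence 3 ε = digitRay upperSequence 0 (-ε) := by
  funext n
  have reflect : 3 - (3 + ε * ((n : ℤ) + 1)) = 0 + (-ε : ℤˣ) * ((n : ℤ) + 1) := by
    push_cast; ring
  rw [digitRay, digitRay, ← reflect, upperSequence, upperSequence, sub_sub_cancel, max_comm]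

lemma cfTail_left_upperSequence :
    cfTail (digitRay upperSequence 0 (-1)) = cfPrefix [1, 1, 2, 2] minTail := by
  have pos := avoidsAlternating_upperSequence.pos
  have hstart : StartsWith (digitRay upperSequence 0 (-1)) [1, 1, 2, 2] :=
    ⟨rfl, rfl, rfl, rfl, trivial⟩
  rw [hstart.cfTail_digitRay_eq pos]
  congr 1
  refine cfTail_eq_minTail (digitRay_pos pos _ _) ⟨rfl, rfl, rfl, rfl, trivial⟩ fun n => ?_
  simp only [digitRay, upperSequence, Units.val_neg, Units.val_one, List.length_cons,
    List.length_nil, Nat.cast_add]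
  split_ifs <;> omega

lemma lambdaVal_upperSequence_zero : lambdaVal upperSequence 0 = upperEndpoint := by
  have pos := avoidsAlternating_upperSequence.pos
  have hright : StartsWith (digitRay upperSequence 0 1) [1, 1, 2] := ⟨rfl, rfl, rfl, trivial⟩
  have right_eq : cfTail (digitRay upperSequence 0 1)
      = cfPrefix [1, 1, 2] (cfPrefix [1, 1, 2, 2] minTail) := by
    rw [hright.cfTail_digitRay_eq pos, ← cfTail_left_upperSequence,
      ← digitRay_upperSequence_three 1]
    rfl
  rw [lambdaVal_eq pos 0 (-1), neg_neg, cfTail_left_upperSequence, right_eq, upperEndpoint]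
  rfl

lemma lambdaVal_upperSequence_three : lambdaVal upperSequence 3 = lambdaVal upperSequence 0 := by
  have pos := avoidsAlternating_upperSequence.pos
  rw [lambdaVal_eq pos 3 1, lambdaVal_eq pos 0 (-1), digitRay_upperSequence_three,
    digitRay_upperSequence_three]
  rfl

lemma upperEndpoint_mem_markovSpectrum : upperEndpoint ∈ markovSpectrum := by
  refine mem_markovSpectrum_of_isGreatest avoidsAlternating_upperSequence.pos
    ⟨⟨0, lambdaVal_upperSequence_zero⟩, forall_mem_range.2 fun k => ?_⟩
  rcases avoidsAlternating_upperSequence.lambdaVal_le_or_isIsolatedTwo k with value_le | hk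
  · exact value_le.trans (sqrt_ten_mem_gap.1.trans sqrt_ten_mem_gap.2).le
  · rcases isIsolatedTwo_upperSequence hk with rfl | rfl
    · exact lambdaVal_upperSequence_zero.le
    · exact (lambdaVal_upperSequence_three.trans lambdaVal_upperSequence_zero).le

lemma eq_sqrt_ten_of_mem_markovSpectrum {x : ℝ} (hx : x ∈ markovSpectrum)
    (hlower : lowerEndpoint < x) (hupper : x < upperEndpoint) : x = √10 := by
  obtain ⟨α, pos, bdd, rfl⟩ := hx
  have below : BelowUpperEndpoint α := ⟨pos, fun k => (le_ciSup bdd k).trans_lt hupper⟩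
  have value_eq {k : ℤ} (hk : IsIsolatedTwo α k) : lambdaVal α k = √10 :=
    lambdaVal_eq_sqrt_ten (below.eq_ite hk)
  have value_le (k : ℤ) : lambdaVal α k ≤ √10 := by
    rcases below.avoidsAlternating.lambdaVal_le_or_isIsolatedTwo k with le_lower | hk
    · exact le_lower.trans sqrt_ten_mem_gap.1.le
    · exact (value_eq hk).le
  obtain ⟨k, lower_lt⟩ := exists_lt_of_lt_ciSup hlower
  have isolated := (below.avoidsAlternating.lambdaVal_le_or_isIsolatedTwo k).resolve_left
    lower_lt.not_ge
  exact (ciSup_le value_le).antisymm ((value_eq isolated).ge.trans (le_ciSup bdd k))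

end BiInfinite

/-- The intersection of the Markov spectrum with the open interval consists of
exactly one (hence isolated) point, and both endpoints belong to the Markov
spectrum. -/
theorem markov_gap_5 :
    markovSpectrum ∩ Ioo (4 * Real.sqrt 30 / 7) ((16351 + 720 * Real.sqrt 30) / 6409) = {(Real.sqrt 10 : ℝ)} ∧
    (4 * Real.sqrt 30 / 7) ∈ markovSpectrum ∧ ((16351 + 720 * Real.sqrt 30) / 6409) ∈ markovSpectrum := by
  rw [← lowerEndpoint_eq, ← upperEndpoint_eq]
  refine ⟨?_, lowerEndpoint_mem_markovSpectrum, upperEndpoint_mem_markovSpectrum⟩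
  ext x
  constructor
  · rintro ⟨x_mem, lower_lt, lt_upper⟩
    exact eq_sqrt_ten_of_mem_markovSpectrum x_mem lower_lt lt_upper
  · rintro rfl
    exact ⟨sqrt_ten_mem_markovSpectrum, sqrt_ten_mem_gap⟩
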